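/- arXiv:2001.02511 — 2 statements merged into one kernel-verified Lean document; each statement's English description precedes it below -/
import Mathlib

section
/- (Lemma 1, part (ii).) Let w = (w_1, …, w_N) with each w_i independent of x_i, regarded as functions w_i : 𝒳_{∖i} → 𝒜_i, where N ≥ 2. If there exists a region i such that for every local operation f_i : 𝒜_i → 𝒳_i the reduced function w^{f_i} is a process function on the remaining N−1 regions, then w itself is a process function. -/
/-- A family of functions `w_i : 𝒳_{∖i} → 𝒜_i` (each taking the outputs of all the other
regions) is a process function if for every family of local operations there is a unique
fixed point. -/
def IsProcessRes {ι : Type*} {X A : ι → Type*}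
    (w : ∀ i : ι, (∀ j : {j : ι // j ≠ i}, X j.1) → A i) : Prop :=
  ∀ f : ∀ i, A i → X i, ∃! a : ∀ i, A i,
    ∀ i, w i (fun j => f j.1 (a j.1)) = a i

/-- Process-function condition for a family of functions whose components take the outputs
of all regions (full tuples). -/
def IsProcessFull {ι : Type*} {X A : ι → Type*}
    (w : ∀ i : ι, (∀ j, X j) → A i) : Prop :=
  ∀ f : ∀ i, A i → X i, ∃! a : ∀ i, A i,
    ∀ i, w i (fun j => f j (a j)) = a i

/-- The reduced function `w^{f_i}` on the remaining regions, obtained by fixing the local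
operation of region `i` to `fi`:  `w^{f_i}_j(x_{∖i}) := w_j(x_{∖i}, f_i(w_i(x_{∖i})))`. -/
def reduceOp {ι : Type*} [DecidableEq ι] {X A : ι → Type*}
    (w : ∀ i : ι, (∀ j : {j : ι // j ≠ i}, X j.1) → A i) (i : ι) (fi : A i → X i) :
    ∀ j : {j : ι // j ≠ i}, (∀ k : {k : ι // k ≠ i}, X k.1) → A j.1 :=
  fun j x => w j.1 (fun k =>
    if h : k.1 = i then cast (congrArg X h).symm (fi (w i x)) else x ⟨k.1, h⟩)

/-!
Fix local operations `f` and a region `i`. Once the inputs of the other regions are known, the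
equation of region `i` determines its own input, because `w i` does not depend on the output of `i`;
substituting it into the remaining equations gives the fixed point equations of `w^{f_i}`. So
forgetting the `i`-th coordinate is a bijection from the fixed points of `w` onto those of
`w^{f_i}`.
-/

theorem existsUnique_prod_eq_and_iff {α β : Type*} (g : β → α) (p : β → Prop) :
    (∃! c : α × β, g c.2 = c.1 ∧ p c.2) ↔ ∃! b, p b := by
  constructor
  · rintro ⟨⟨_, b⟩, ⟨-, hb⟩, hunique⟩
    exact ⟨b, hb, fun b' hb' => congrArg Prod.snd (hunique (g b', b') ⟨rfl, hb'⟩)⟩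
  · rintro ⟨b, hb, hunique⟩
    refine ⟨(g b, b), ⟨rfl, hb⟩, ?_⟩
    rintro ⟨_, b'⟩ ⟨hb'_eq, hb'⟩
    obtain rfl := hunique b' hb'
    exact Prod.ext hb'_eq.symm rfl

section

variable {ι : Type*} [DecidableEq ι] {X A : ι → Type*}
  (w : ∀ i : ι, (∀ j : {j : ι // j ≠ i}, X j.1) → A i) (i : ι)

theorem reduceOp_restrict_of_eq {fi : A i → X i} {x : ∀ j, X j}
    (hx : fi (w i fun j => x j.1) = x i) (j : {j : ι // j ≠ i}) :
    reduceOp w i fi j (fun k => x k.1) = w j.1 (fun k => x k.1) := by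
  refine congrArg (w j.1) (funext fun ⟨k, _⟩ => ?_)
  by_cases h : k = i
  · subst h
    simp [hx]
  · simp [h]

theorem forall_apply_eq_iff_reduceOp (f : ∀ j, A j → X j) (a : ∀ j, A j) :
    (∀ k, w k (fun j => f j.1 (a j.1)) = a k) ↔
      w i (fun j => f j.1 (a j.1)) = a i ∧
        ∀ j : {j : ι // j ≠ i}, reduceOp w i (f i) j (fun k => f k.1 (a k.1)) = a j.1 := by
  rw [← and_forall_ne i, Subtype.forall]
  refine and_congr_right fun hi => forall₂_congr fun j hj => ?_
  rw [reduceOp_restrict_of_eq w i (x := fun k => f k (a k)) (congrArg (f i) hi) ⟨j, hj⟩]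

theorem existsUnique_apply_eq_iff_reduceOp (f : ∀ j, A j → X j) :
    (∃! a : ∀ j, A j, ∀ k, w k (fun j => f j.1 (a j.1)) = a k) ↔
      ∃! b : ∀ j : {j : ι // j ≠ i}, A j.1,
        ∀ j, reduceOp w i (f i) j (fun k => f k.1 (b k)) = b j := by
  refine Iff.trans ?_ (existsUnique_prod_eq_and_iff (fun b => w i fun j => f j.1 (b j)) _)
  exact (Equiv.piSplitAt i A).existsUnique_congr (forall_apply_eq_iff_reduceOp w i f)

theorem process_of_reduced_general :
    IsProcessRes w ↔ ∀ fi : A i → X i,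
      IsProcessFull (X := fun j : {j : ι // j ≠ i} => X j.1) (A := fun j => A j.1)
        (reduceOp w i fi) := by
  constructor
  · intro hw fi g
    obtain ⟨f, hf⟩ := (Equiv.piSplitAt i fun j => A j → X j).surjective (fi, g)
    obtain ⟨rfl, rfl⟩ := Prod.mk.inj hf
    exact (existsUnique_apply_eq_iff_reduceOp w i f).mp (hw f)
  · exact fun h f => (existsUnique_apply_eq_iff_reduceOp w i f).mpr (h (f i) fun j => f j.1)

end

/-- Lemma 1, part (ii): if there exists a region `i` such that for every local
operation `f_i` the reduced function `w^{f_i}` is a process function on the remaining `N−1`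
regions, then `w` itself is a process function. -/
theorem process_of_reduced
    {N : ℕ} (hN : 2 ≤ N) (X A : Fin N → Type*)
    [∀ i, Nonempty (X i)] [∀ i, Nonempty (A i)]
    (w : ∀ i : Fin N, (∀ j : {j : Fin N // j ≠ i}, X j.1) → A i)
    (h : ∃ i : Fin N, ∀ fi : A i → X i,
      IsProcessFull (ι := {j : Fin N // j ≠ i})
        (X := fun j => X j.1) (A := fun j => A j.1) (reduceOp w i fi)) :
    IsProcessRes w := by
  obtain ⟨i, hi⟩ := h
  exact (process_of_reduced_general w i).mpr hi
end

section
/- (At most conditional one-way signalling.) Let w = (w_1, …, w_N), N ≥ 3, be a process function with w_i : 𝒳_{∖i} → 𝒜_i. Then for every pair of distinct regions i, j and every fixed assignment x_{∖{i,j}} of outputs to the other regions, it is not the case that both i signals to j conditioned on x_{∖{i,j}} and j signals to i conditioned on x_{∖{i,j}}; i.e., at least one of the functions x_j ↦ w_i(x_j, x_{∖{i,j}}) and x_i ↦ w_j(x_i, x_{∖{i,j}}) is constant. -/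
/-!
Two output assignments `x ≠ y` can both be realised at fixed points of one family of local
operations, unless some region on which they differ receives the same input from both. Uniqueness
of fixed points therefore yields a region `k` with `x k ≠ y k` and equal inputs. If `i` and `j`
signalled to each other, one could change the outputs of `i` and `j` alone so that both of their
inputs change, leaving no such region.
-/

section FixedPoints

variable {ι : Type*} {X A : ι → Type*} {w : ∀ i : ι, (∀ j : {j : ι // j ≠ i}, X j.1) → A i}

/-- The uniqueness half of the process function condition: no family of local operations has two
distinct fixed points. -/
def HasAtMostOneFixedPoint (w : ∀ i : ι, (∀ j : {j : ι // j ≠ i}, X j.1) → A i) : Prop :=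
  ∀ f : ∀ i, A i → X i, {a : ∀ i, A i | ∀ i, w i (fun j => f j.1 (a j.1)) = a i}.Subsingleton

/-- The input that `w` delivers to region `i` when the outputs of all regions, including the
irrelevant output of `i` itself, are given by `x`. -/
def inducedInput (w : ∀ i : ι, (∀ j : {j : ι // j ≠ i}, X j.1) → A i) (x : ∀ i, X i) (i : ι) :
    A i :=
  w i fun j => x j.1

theorem IsProcessRes.hasAtMostOneFixedPoint (hw : IsProcessRes w) : HasAtMostOneFixedPoint w :=
  fun f _ ha _ hb => (hw f).unique ha hb

theorem inducedInput_isFixedPoint {x : ∀ i, X i} {f : ∀ i, A i → X i}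
    (hx : ∀ i, f i (inducedInput w x i) = x i) (i : ι) :
    w i (fun j => f j.1 (inducedInput w x j.1)) = inducedInput w x i :=
  congrArg (w i) (funext fun j => hx j.1)

theorem exists_localOperations_of_inducedInput_ne {x y : ∀ i, X i}
    (h : ∀ i, x i ≠ y i → inducedInput w x i ≠ inducedInput w y i) :
    ∃ f : ∀ i, A i → X i,
      (∀ i, f i (inducedInput w x i) = x i) ∧ ∀ i, f i (inducedInput w y i) = y i := by
  classical
  refine ⟨fun i a => if a = inducedInput w x i then x i else y i, fun i => if_pos rfl, fun i => ?_⟩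
  by_cases hxy : x i = y i
  · simp [hxy]
  · exact if_neg (h i hxy).symm

theorem HasAtMostOneFixedPoint.exists_ne_and_inducedInput_eq (hw : HasAtMostOneFixedPoint w)
    {x y : ∀ i, X i} (hxy : x ≠ y) :
    ∃ i, x i ≠ y i ∧ inducedInput w x i = inducedInput w y i := by
  by_contra! hne
  obtain ⟨f, hfx, hfy⟩ := exists_localOperations_of_inducedInput_ne hne
  obtain ⟨i, hi⟩ := Function.ne_iff.mp hxy
  have inputs_eq : inducedInput w x = inducedInput w y :=
    hw f (inducedInput_isFixedPoint hfx) (inducedInput_isFixedPoint hfy)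
  exact hne i hi (congrFun inputs_eq i)

theorem HasAtMostOneFixedPoint.inducedInput_eq_or_inducedInput_eq (hw : HasAtMostOneFixedPoint w)
    {i j : ι} {x y : ∀ k, X k} (hxy : ∀ k, k ≠ i → k ≠ j → x k = y k) :
    inducedInput w x i = inducedInput w y i ∨ inducedInput w x j = inducedInput w y j := by
  rcases eq_or_ne x y with rfl | hne
  · exact Or.inl rfl
  obtain ⟨k, hk, hin⟩ := hw.exists_ne_and_inducedInput_eq hne
  rcases eq_or_ne k i with rfl | hki
  · exact Or.inl hin
  rcases eq_or_ne k j with rfl | hkj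
  · exact Or.inr hin
  · exact absurd (hxy k hki hkj) hk

end FixedPoints

section ConditionalSignalling

variable {ι : Type*} [DecidableEq ι] {X A : ι → Type*}
  {w : ∀ i : ι, (∀ j : {j : ι // j ≠ i}, X j.1) → A i} {i j : ι}

/-- The output assignment equal to `xi` at `i`, to `xj` at `j` and to `z` at all other regions.
If `i = j`, the value `xi` takes precedence. -/
def glueOutputs (z : ∀ k : {k : ι // k ≠ i ∧ k ≠ j}, X k.1) (xi : X i) (xj : X j) (k : ι) : X k :=
  if hi : k = i then cast (congrArg X hi).symm xi
  else if hj : k = j then cast (congrArg X hj).symm xj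
  else z ⟨k, hi, hj⟩

theorem glueOutputs_of_ne_of_ne (z : ∀ k : {k : ι // k ≠ i ∧ k ≠ j}, X k.1) (xi : X i) (xj : X j)
    {k : ι} (hi : k ≠ i) (hj : k ≠ j) : glueOutputs z xi xj k = z ⟨k, hi, hj⟩ := by
  rw [glueOutputs, dif_neg hi, dif_neg hj]

theorem inducedInput_glueOutputs_left (z : ∀ k : {k : ι // k ≠ i ∧ k ≠ j}, X k.1)
    (xi : X i) (xj : X j) :
    inducedInput w (glueOutputs z xi xj) i =
      w i (fun k => if h : k.1 = j then cast (congrArg X h).symm xj else z ⟨k.1, ⟨k.2, h⟩⟩) :=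
  congrArg (w i) (funext fun k => dif_neg k.2)

theorem inducedInput_glueOutputs_right (z : ∀ k : {k : ι // k ≠ i ∧ k ≠ j}, X k.1)
    (xi : X i) (xj : X j) :
    inducedInput w (glueOutputs z xi xj) j =
      w j (fun k => if h : k.1 = i then cast (congrArg X h).symm xi else z ⟨k.1, ⟨h, k.2⟩⟩) :=
  congrArg (w j) (funext fun k => dite_congr rfl (fun _ => rfl) fun _ => dif_neg k.2)

theorem at_most_one_way_conditional_signalling_general (hw : HasAtMostOneFixedPoint w)
    (z : ∀ k : {k : ι // k ≠ i ∧ k ≠ j}, X k.1) :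
    (∀ xj xj' : X j,
        w i (fun k => if h : k.1 = j then cast (congrArg X h).symm xj
                      else z ⟨k.1, ⟨k.2, h⟩⟩)
      = w i (fun k => if h : k.1 = j then cast (congrArg X h).symm xj'
                      else z ⟨k.1, ⟨k.2, h⟩⟩)) ∨
    (∀ xi xi' : X i,
        w j (fun k => if h : k.1 = i then cast (congrArg X h).symm xi
                      else z ⟨k.1, ⟨h, k.2⟩⟩)
      = w j (fun k => if h : k.1 = i then cast (congrArg X h).symm xi'
                      else z ⟨k.1, ⟨h, k.2⟩⟩)) := by
  by_contra! hboth
  obtain ⟨⟨xj, xj', hi⟩, ⟨xi, xi', hj⟩⟩ := hboth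
  have agree_off : ∀ k, k ≠ i → k ≠ j → glueOutputs z xi xj k = glueOutputs z xi' xj' k :=
    fun k hki hkj => by simp only [glueOutputs_of_ne_of_ne z _ _ hki hkj]
  rcases hw.inducedInput_eq_or_inducedInput_eq agree_off with hin | hin
  · exact hi (by simpa only [inducedInput_glueOutputs_left] using hin)
  · exact hj (by simpa only [inducedInput_glueOutputs_right] using hin)

end ConditionalSignalling

/-- at most conditional one-way signalling: if `w` is a process function on
`N ≥ 3` regions, then for every pair of distinct regions `i, j` and every fixed assignment
of outputs to the other regions, at least one of the functions `x_j ↦ w_i(x_j, x_{∖{i,j}})`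
and `x_i ↦ w_j(x_i, x_{∖{i,j}})` is constant, i.e. it is not the case that both `i` signals
to `j` and `j` signals to `i` conditioned on `x_{∖{i,j}}`. -/
theorem at_most_one_way_conditional_signalling
    {N : ℕ} (hN : 3 ≤ N) (X A : Fin N → Type*)
    [∀ i, Nonempty (X i)] [∀ i, Nonempty (A i)]
    (w : ∀ i : Fin N, (∀ j : {j : Fin N // j ≠ i}, X j.1) → A i)
    (hw : IsProcessRes w)
    (i j : Fin N) (hij : i ≠ j)
    (z : ∀ k : {k : Fin N // k ≠ i ∧ k ≠ j}, X k.1) :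
    (∀ xj xj' : X j,
        w i (fun k => if h : k.1 = j then cast (congrArg X h).symm xj
                      else z ⟨k.1, ⟨k.2, h⟩⟩)
      = w i (fun k => if h : k.1 = j then cast (congrArg X h).symm xj'
                      else z ⟨k.1, ⟨k.2, h⟩⟩)) ∨
    (∀ xi xi' : X i,
        w j (fun k => if h : k.1 = i then cast (congrArg X h).symm xi
                      else z ⟨k.1, ⟨h, k.2⟩⟩)
      = w j (fun k => if h : k.1 = i then cast (congrArg X h).symm xi'
                      else z ⟨k.1, ⟨h, k.2⟩⟩)) :=
  at_most_one_way_conditional_signalling_general hw.hasAtMostOneFixedPoint z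
end
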